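/- Let p be a prime and suppose 2 ≤ r ≤ p. Then w(r, p+1) > p^{r-1} · 2^p, where w is the van der Waerden number. (This uses Berlekamp's theorem w(2, p+1) > p·2^p as a base case.) -/

import Mathlib

/-!
The bound follows from a product construction: a valid `r`-coloring `c` of `{1,...,N}` with
`r + 1 ≤ p` yields a valid `(r + 1)`-coloring of `{1,...,p * N}` (`validColoring_lift`). Each
`n ≤ N` is replaced by the block of length `p` whose entries run cyclically through the `r + 1`
colors, starting from a shift determined by `c n`.

* A progression whose difference is a multiple of `p` stays at one position inside the blocks,
  where the new color determines the old one, so it projects to a monochromatic progression of `c`.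
* A progression whose difference is prime to `p` visits every position. Since `c` uses only `r`
  of the `r + 1` possible shifts, every position misses one color, and every color is missed
  at some position because `r + 1 ≤ p`.

Starting from the coloring given by Berlekamp's bound, `r - 2` such steps produce a valid
`r`-coloring of `{1,...,p ^ (r - 1) * 2 ^ p}`. As `vdw` is an infimum of natural numbers, which is
`0` for the empty set, van der Waerden's theorem is needed as well (`exists_not_validColoring`);
it is deduced from the Hales-Jewett theorem.
-/

/-- `hasAP c N k` : the coloring `c` of `{1,...,N}` contains a monochromatic
arithmetic progression of length `k` with positive common difference. -/
def hasAP (c : ℕ → ℕ) (N k : ℕ) : Prop :=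
  ∃ a d, 1 ≤ a ∧ 1 ≤ d ∧ a + (k - 1) * d ≤ N ∧ ∀ i < k, c (a + i * d) = c a

/-- `validColoring r k N c` : `c` is an `r`-coloring of `{1,...,N}` with no
monochromatic `k`-term arithmetic progression. -/
def validColoring (r k N : ℕ) (c : ℕ → ℕ) : Prop :=
  (∀ n, 1 ≤ n → n ≤ N → 1 ≤ c n ∧ c n ≤ r) ∧ ¬ hasAP c N k

/-- The van der Waerden number: least `N` such that no valid `r`-coloring of
`{1,...,N}` (avoiding `k`-term monochromatic APs) exists. -/
noncomputable def vdw (r k : ℕ) : ℕ := sInf {N | ¬ ∃ c : ℕ → ℕ, validColoring r k N c}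

/-- The block `S_i(r,k)`: `j`-th entry (`1 ≤ j ≤ p`) is `((i + j - 2) % r) + 1`. -/
def Sblock (r i j : ℕ) : ℕ := ((i + j - 2) % r) + 1

/-- The blow-up of a coloring `c`: the number `n` is replaced by a block of length `p` running
cyclically through `r` colors, with entries `Sblock r (c n + 1) j` for `1 ≤ j ≤ p`. -/
def blowUp (p r : ℕ) (c : ℕ → ℕ) (x : ℕ) : ℕ := Sblock r (c ((x - 1) / p + 1) + 1) ((x - 1) % p + 1)

lemma blowUp_eq (p r : ℕ) (c : ℕ → ℕ) (x : ℕ) :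
    blowUp p r c x = (c ((x - 1) / p + 1) + (x - 1) % p) % r + 1 := by
  unfold blowUp Sblock
  congr 2
  omega

lemma exists_progression_mod_eq {p d : ℕ} (hp : p.Prime) (hd : ¬ p ∣ d) (a s : ℕ) (hs : s < p) :
    ∃ i < p, (a + i * d) % p = s := by
  have : Fact p.Prime := ⟨hp⟩
  have hd' : (d : ZMod p) ≠ 0 := by rwa [Ne, ZMod.natCast_eq_zero_iff]
  refine ⟨(((s : ZMod p) - a) / d).val, ZMod.val_lt _, ?_⟩
  have h : ((a + (((s : ZMod p) - a) / d).val * d : ℕ) : ZMod p) = (s : ℕ) := by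
    push_cast
    rw [ZMod.natCast_zmod_val]
    field_simp
    ring
  rw [ZMod.natCast_eq_natCast_iff'] at h
  rwa [Nat.mod_eq_of_lt hs] at h

lemma validColoring_lift {p r N : ℕ} {c : ℕ → ℕ} (hp : p.Prime) (hrp : r + 1 ≤ p)
    (hc : validColoring r (p + 1) N c) :
    validColoring (r + 1) (p + 1) (p * N) (blowUp p (r + 1) c) := by
  obtain ⟨hcol, hAP⟩ := hc
  have hp0 : 0 < p := hp.pos
  have hblock : ∀ x, 1 ≤ x → x ≤ p * N → (x - 1) / p + 1 ≤ N := by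
    intro x h1 h2
    have : (x - 1) / p < N := by
      rw [Nat.div_lt_iff_lt_mul hp0, mul_comm]
      omega
    omega
  refine ⟨fun n _ _ => ?_, ?_⟩
  · rw [blowUp_eq]
    have := Nat.mod_lt (c ((n - 1) / p + 1) + (n - 1) % p) r.succ_pos
    rw [Nat.succ_eq_add_one] at this
    omega
  · rintro ⟨a, d, ha, hd, hle, hmono⟩
    simp only [Nat.add_sub_cancel] at hle
    by_cases hpd : p ∣ d
    · obtain ⟨e, rfl⟩ := hpd
      have hdiv : ∀ i, (a + i * (p * e) - 1) / p = (a - 1) / p + i * e := by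
        intro i
        rw [show a + i * (p * e) - 1 = a - 1 + p * (i * e) by
          rw [show i * (p * e) = p * (i * e) by ring]; omega]
        rw [Nat.add_mul_div_left _ _ hp0]
      have hmod : ∀ i, (a + i * (p * e) - 1) % p = (a - 1) % p := by
        intro i
        rw [show a + i * (p * e) - 1 = a - 1 + p * (i * e) by
          rw [show i * (p * e) = p * (i * e) by ring]; omega]
        rw [Nat.add_mul_mod_self_left]
      have hlast : (a - 1) / p + p * e + 1 ≤ N := by
        rw [← hdiv]
        exact hblock _ (by omega) hle
      refine hAP ⟨(a - 1) / p + 1, e, Nat.le_add_left _ _, Nat.pos_of_mul_pos_left hd, ?_, fun i hi => ?_⟩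
      · simp only [Nat.add_sub_cancel]
        omega
      · have h := hmono i hi
        rw [blowUp_eq, blowUp_eq, hdiv, hmod, Nat.add_right_cancel_iff] at h
        have h' : c ((a - 1) / p + i * e + 1) ≡ c ((a - 1) / p + 1) [MOD r + 1] :=
          Nat.ModEq.add_right_cancel' _ h
        have hie : i * e ≤ p * e := Nat.mul_le_mul_right _ (by omega)
        have h1 := hcol ((a - 1) / p + i * e + 1) (Nat.le_add_left _ _) (by omega)
        have h2 := hcol ((a - 1) / p + 1) (Nat.le_add_left _ _) (by omega)
        rw [show (a - 1) / p + 1 + i * e = (a - 1) / p + i * e + 1 by ring]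
        exact h'.eq_of_lt_of_lt (by omega) (by omega)
    · -- The color `s + 1` is missing at the position `s` (counted from `0`) of every block.
      obtain ⟨s, hs⟩ : ∃ s, s = (c ((a - 1) / p + 1) + (a - 1) % p) % (r + 1) := ⟨_, rfl⟩
      have hsr : s < r + 1 := hs ▸ Nat.mod_lt _ (Nat.succ_pos r)
      obtain ⟨i, hi, his⟩ := exists_progression_mod_eq hp hpd (a - 1) s (by omega)
      have h := hmono i (by omega)
      rw [blowUp_eq, blowUp_eq, ← hs, show a + i * d - 1 = a - 1 + i * d by omega, his,
        Nat.add_right_cancel_iff] at h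
      have hid : i * d ≤ p * d := Nat.mul_le_mul_right _ hi.le
      have hb := hblock (a + i * d) (by omega) (by omega)
      rw [show a + i * d - 1 = a - 1 + i * d by omega] at hb
      have h1 := hcol _ (Nat.le_add_left _ _) hb
      have h' : c ((a - 1 + i * d) / p + 1) + s ≡ 0 + s [MOD r + 1] := by
        rw [Nat.ModEq, h, zero_add, Nat.mod_eq_of_lt hsr]
      have h0 := (Nat.ModEq.add_right_cancel' _ h').eq_of_lt_of_lt (by omega) (by omega)
      omega

/-- Van der Waerden's theorem. Words over `{0,...,p}` are sent to `1` plus the sum of their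
letters; a combinatorial line then becomes a progression of length `p + 1` whose difference is the
number of moving coordinates. -/
lemma exists_not_validColoring (r p : ℕ) : ∃ N, ¬ ∃ c : ℕ → ℕ, validColoring r (p + 1) N c := by
  obtain ⟨ι, hι, H⟩ :=
    Combinatorics.Line.exists_mono_in_high_dimension (Fin (p + 1)) (Fin (r + 1))
  refine ⟨1 + Fintype.card ι * p, ?_⟩
  rintro ⟨c, hcol, hAP⟩
  have hbound : ∀ f : ι → Fin (p + 1), 1 + ∑ i, (f i : ℕ) ≤ 1 + Fintype.card ι * p := by
    intro f
    have := Finset.sum_le_card_nsmul Finset.univ (fun i => (f i : ℕ)) p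
      (fun i _ => Nat.lt_succ_iff.1 (f i).2)
    simpa using this
  obtain ⟨l, κ, hl⟩ := H fun f =>
    ⟨c (1 + ∑ i, (f i : ℕ)), by
      have := (hcol _ (by omega) (hbound f)).2
      omega⟩
  have hsum : ∀ x : Fin (p + 1), ∑ i, (l x i : ℕ) =
      ∑ i, (l 0 i : ℕ) + x * (Finset.univ.filter fun i => l.idxFun i = none).card := by
    intro x
    rw [Finset.card_filter, Finset.mul_sum, ← Finset.sum_add_distrib]
    refine Finset.sum_congr rfl fun i _ => ?_
    rw [Combinatorics.Line.apply_def, Combinatorics.Line.apply_def]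
    cases h : l.idxFun i <;> simp [h]
  refine hAP ⟨1 + ∑ i, (l 0 i : ℕ), (Finset.univ.filter fun i => l.idxFun i = none).card,
    by omega, ?_, ?_, fun i hi => ?_⟩
  · obtain ⟨i, hi⟩ := l.proper
    exact Finset.card_pos.2 ⟨i, by simpa using hi⟩
  · have h := hbound (l (Fin.last p))
    rw [hsum, Fin.val_last] at h
    simp only [Nat.add_sub_cancel]
    omega
  · have h1 := congrArg Fin.val ((hl ⟨i, hi⟩).trans (hl 0).symm)
    have h2 := hsum ⟨i, hi⟩
    simp only at h1 h2
    rw [h2] at h1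
    rwa [add_assoc]

lemma lt_vdw_of_validColoring {r p M : ℕ} {c : ℕ → ℕ} (hc : validColoring r (p + 1) M c) :
    M < vdw r (p + 1) := by
  have hmem : ¬ ∃ c : ℕ → ℕ, validColoring r (p + 1) (vdw r (p + 1)) c :=
    Nat.sInf_mem (s := {N | ¬ ∃ c : ℕ → ℕ, validColoring r (p + 1) N c})
      (exists_not_validColoring r p)
  by_contra! hle
  refine hmem ⟨c, fun n h1 h2 => hc.1 n h1 (h2.trans hle), ?_⟩
  rintro ⟨a, d, ha, hd, had, hmono⟩
  exact hc.2 ⟨a, d, ha, hd, had.trans hle, hmono⟩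

/-- Main theorem: if `p` is prime, `2 ≤ r ≤ p`, and Berlekamp's bound
`w(2, p+1) > p * 2^p` holds, then `w(r, p+1) > p^(r-1) * 2^p`. -/
theorem vdw_gt_pow_two_pow (p r : ℕ) (hp : p.Prime) (hr : 2 ≤ r) (hrp : r ≤ p)
    (berlekamp : p * 2 ^ p < vdw 2 (p + 1)) :
    p ^ (r - 1) * 2 ^ p < vdw r (p + 1) := by
  suffices h : ∃ c, validColoring r (p + 1) (p ^ (r - 1) * 2 ^ p) c by
    obtain ⟨c, hc⟩ := h
    exact lt_vdw_of_validColoring hc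
  induction r, hr using Nat.le_induction with
  | base => simpa using Nat.notMem_of_lt_sInf berlekamp
  | succ r hr ih =>
    obtain ⟨c, hc⟩ := ih (by omega)
    refine ⟨blowUp p (r + 1) c, ?_⟩
    have hpow : p ^ (r + 1 - 1) * 2 ^ p = p * (p ^ (r - 1) * 2 ^ p) := by
      obtain ⟨t, rfl⟩ : ∃ t, r = t + 1 := ⟨r - 1, by omega⟩
      simp only [Nat.add_sub_cancel]
      ring
    rw [hpow]
    exact validColoring_lift hp hrp hc
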